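/- Let Ω ⊂ ℝ^d be compact and convex with non-negligible interior, take μ, ν ∈ 𝒫(Ω) with μ absolutely continuous with respect to Lebesgue measure, fix λ₀ > 0, set λ_{n+1} = λ_n/2, ν₀ = ν, and for each n ≥ 0 define ν_{n+1} = argmin_{ρ ∈ 𝒫(Ω)} (1/2)W₂²(ρ, μ) + λ_n W₁(ρ, ν_n). Then the energy identity (1/2)W₂²(ν, μ) = Σ_{n=0}^∞ [ D_{λ_n}(ν_n, ν_{n+1}) + λ_n W₁(ν_n, ν_{n+1}) ] holds, where in D_{λ_n} the reference measure is μ. -/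

import Mathlib

/-!
The theorem is a telescoping sum. Write `E n = ½ W₂²(ν_n, μ)`. Each summand equals
`E n - E (n + 1)` (`Dlam_add_W1`), and `E n → 0`, because comparing `ν_{n+1}` with the competitor
`μ` gives `E (n + 1) ≤ λ_n W₁(μ, ν_n) ≤ λ_n diam Ω`.

The one-step identity says that the supremum in `D_λ(ν, ρ)` equals `λ W₁(ν, ρ)` when `ρ` minimizes
`½ W₂²(·, μ) + λ W₁(·, ν)`. The bound `≤` is weak duality for `λ`-Lipschitz functions
(`lipschitz_le_W1`). For `≥`, a single potential `φ` is produced (`exists_potential`) that is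
`λ`-Lipschitz, is a subgradient of `½ W₂²(·, μ)` at `ρ`, and is optimal for `λ W₁(ν, ρ)`. It suffices
that `½ W₂²(ρ, μ) + λ W₁(ρ, ν) ≤ ∫ φ^{c₂} dμ + ∫ φ dν`, since the right side splits as
`(∫ φ^{c₂} dμ + ∫ φ dρ) + ∫ φ d(ν - ρ)` and weak duality bounds each part by the corresponding term
on the left, so both bounds are equalities.

That inequality comes from strong duality for plans on triples `(x, y, z)` with only the first and
last marginals prescribed, `μ` and `ν`, and cost `c₂(x, y) + λ |y - z|`. Hahn–Banach applied to the
sublinear functional `h ↦ inf {∫ φ dμ + ∫ ψ dν : h(x, y, z) ≤ φ(x) + ψ(z)}` and the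
Riesz–Markov–Kakutani theorem give a plan whose cost is the dual supremum (`exists_plan_dual`); its
middle marginal is a competitor for `ρ`. The special form of the cost allows `ψ` to be replaced by
a `λ`-Lipschitz function and `φ` by `ψ^{c₂}`, after which Arzelà–Ascoli gives a maximizer
(`exists_plan_potential`).
-/

open MeasureTheory Filter Topology

noncomputable section

abbrev Ed (d : ℕ) := EuclideanSpace ℝ (Fin d)

variable {d : ℕ}

/-- `γ` is a coupling (transport plan) between `μ` and `ν`. -/
def IsCoupling (μ ν : Measure (Ed d)) (γ : Measure (Ed d × Ed d)) : Prop :=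
  γ.map Prod.fst = μ ∧ γ.map Prod.snd = ν

/-- The optimal transport cost `𝓘_c(μ,ν)` for the pointwise cost `c`. -/
def tCost (c : Ed d → Ed d → ℝ) (μ ν : Measure (Ed d)) : ℝ :=
  sInf {r | ∃ γ : Measure (Ed d × Ed d), IsCoupling μ ν γ ∧ r = ∫ p, c p.1 p.2 ∂γ}

/-- The Wasserstein-1 distance. -/
def W1 (μ ν : Measure (Ed d)) : ℝ := tCost (fun x y => ‖x - y‖) μ ν

/-- The squared Wasserstein-2 distance `W₂²(μ,ν)`. -/
def W2sq (μ ν : Measure (Ed d)) : ℝ := tCost (fun x y => ‖x - y‖ ^ 2) μ ν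

/-- The quadratic cost `c₂(x,y) = |x-y|²/2`. -/
def c2 (x y : Ed d) : ℝ := ‖x - y‖ ^ 2 / 2

/-- The Huber cost `c_{2,λ}`. -/
def huber (lam : ℝ) (x y : Ed d) : ℝ :=
  if ‖x - y‖ ≤ lam then ‖x - y‖ ^ 2 / 2 else lam * ‖x - y‖ - lam ^ 2 / 2

/-- The `c`-transform on `Ω`: `φ^c(x) = inf_{y ∈ Ω} c(x,y) - φ(y)`. -/
def ctrans (c : Ed d → Ed d → ℝ) (Ω : Set (Ed d)) (φ : Ed d → ℝ) (x : Ed d) : ℝ :=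
  sInf ((fun y => c x y - φ y) '' Ω)

/-- A Borel probability measure concentrated on `Ω`. -/
def ProbOn (Ω : Set (Ed d)) (μ : Measure (Ed d)) : Prop :=
  IsProbabilityMeasure μ ∧ μ Ωᶜ = 0

/-- `γ` is an optimal transport plan between `μ` and `ν` for cost `c`. -/
def IsOptimalPlan (c : Ed d → Ed d → ℝ) (μ ν : Measure (Ed d))
    (γ : Measure (Ed d × Ed d)) : Prop :=
  IsCoupling μ ν γ ∧ ∀ γ' : Measure (Ed d × Ed d), IsCoupling μ ν γ' →
    ∫ p, c p.1 p.2 ∂γ ≤ ∫ p, c p.1 p.2 ∂γ'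

/-- `T` is an optimal transport map from `μ` to `ν` for cost `c`. -/
def IsOptimalMap (c : Ed d → Ed d → ℝ) (μ ν : Measure (Ed d)) (T : Ed d → Ed d) : Prop :=
  AEMeasurable T μ ∧ μ.map T = ν ∧
    ∀ γ : Measure (Ed d × Ed d), IsCoupling μ ν γ →
      ∫ x, c x (T x) ∂μ ≤ ∫ p, c p.1 p.2 ∂γ

/-- The WROF functional `(1/2) W₂²(μ,ρ) + λ W₁(ρ,ν)`. -/
def wrof (lam : ℝ) (μ ν ρ : Measure (Ed d)) : ℝ := W2sq μ ρ / 2 + lam * W1 ρ ν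

/-- `ρ ∈ B_λ(μ)`: there exists an optimal plan for the Huber cost `c_{2,λ}` from `μ` to `ρ`
supported in `{|x-y| ≤ λ}`. -/
def Bset (lam : ℝ) (μ ρ : Measure (Ed d)) : Prop :=
  ∃ γ : Measure (Ed d × Ed d), IsOptimalPlan (huber lam) μ ρ γ ∧
    γ {p : Ed d × Ed d | lam < ‖p.1 - p.2‖} = 0

/-- `φ` solves the dual problem `sup_{φ ∈ λ-Lip(Ω)} ∫ φ^{c₂} dμ + ∫ φ dν`. -/
def DualSol (Ω : Set (Ed d)) (lam : ℝ) (μ ν : Measure (Ed d)) (φ : Ed d → ℝ) : Prop :=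
  LipschitzOnWith (Real.toNNReal lam) φ Ω ∧
    ∀ ψ : Ed d → ℝ, LipschitzOnWith (Real.toNNReal lam) ψ Ω →
      (∫ x, ctrans c2 Ω ψ x ∂μ) + ∫ x, ψ x ∂ν ≤ (∫ x, ctrans c2 Ω φ x ∂μ) + ∫ x, φ x ∂ν

/-- `φ ∈ ∂((1/2)W₂²(·,μ))(ρ)`, i.e. `φ ∈ C(Ω)` with `∫φ^{c₂}dμ + ∫φ dρ = (1/2)W₂²(ρ,μ)`. -/
def InSubdiffW2 (Ω : Set (Ed d)) (μ ρ : Measure (Ed d)) (φ : Ed d → ℝ) : Prop :=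
  ContinuousOn φ Ω ∧ (∫ x, ctrans c2 Ω φ x ∂μ) + ∫ x, φ x ∂ρ = W2sq ρ μ / 2

/-- The divergence `D_λ(ν,ρ)` with reference measure `μ`. -/
def Dlam (Ω : Set (Ed d)) (lam : ℝ) (μ ν ρ : Measure (Ed d)) : EReal :=
  ((W2sq ν μ / 2 : ℝ) : EReal) - ((W2sq ρ μ / 2 : ℝ) : EReal) -
    ⨆ φ ∈ {φ : Ed d → ℝ | InSubdiffW2 Ω μ ρ φ ∧ LipschitzOnWith (Real.toNNReal lam) φ Ω},
      (((∫ x, φ x ∂ν) - ∫ x, φ x ∂ρ : ℝ) : EReal)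

/-- `φ` is `c`-concave on `Ω`: `φ = ψ^c` for some `ψ`. -/
def CConcaveOn (c : Ed d → Ed d → ℝ) (Ω : Set (Ed d)) (φ : Ed d → ℝ) : Prop :=
  ∃ ψ : Ed d → ℝ, ∀ x ∈ Ω, φ x = ctrans c Ω ψ x

/-- The (topological) support of a measure. -/
def msupport {α : Type*} [TopologicalSpace α] [MeasurableSpace α] (γ : Measure α) : Set α :=
  {p | ∀ U : Set α, IsOpen U → p ∈ U → γ U ≠ 0}

/-! ### Duality on a compact metric space -/

section Duality

variable {X : Type*} [MetricSpace X] [MeasurableSpace X]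

theorem integrable_contMap [CompactSpace X] [BorelSpace X] (μ : Measure X) [IsFiniteMeasure μ] (f : C(X, ℝ)) :
    Integrable (fun x => f x) μ :=
  f.continuous.integrable_of_hasCompactSupport (HasCompactSupport.of_compactSpace _)

/-- Riesz–Markov–Kakutani on a compact space, for functionals on `C(Y, ℝ)` instead of
compactly supported functions. -/
theorem exists_measure_of_positive {Y : Type*} [MetricSpace Y] [CompactSpace Y]
    [MeasurableSpace Y] [BorelSpace Y] (L : C(Y, ℝ) →ₗ[ℝ] ℝ)
    (hL : ∀ h : C(Y, ℝ), (∀ y, 0 ≤ h y) → 0 ≤ L h) :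
    ∃ γ : Measure Y, IsFiniteMeasure γ ∧ ∀ h : C(Y, ℝ), ∫ y, h y ∂γ = L h := by
  let Λ : CompactlySupportedContinuousMap Y ℝ →ₚ[ℝ] ℝ := PositiveLinearMap.mk₀
    { toFun := fun f => L f.toContinuousMap
      map_add' := fun f g => by
        rw [← map_add]; rfl
      map_smul' := fun c f => by
        rw [← map_smul]; rfl }
    (fun f hf => hL _ (fun y => hf y))
  refine ⟨RealRMK.rieszMeasure Λ, inferInstance, fun h => ?_⟩
  exact RealRMK.integral_rieszMeasure Λ
    (CompactlySupportedContinuousMap.continuousMapEquiv h)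

/-- Values of the dual competitors: pairs of potentials `φ`, `ψ` with `h(x,y,z) ≤ φ(x) + ψ(z)`. -/
def dualVals (μ ν : Measure X) (h : C(X × X × X, ℝ)) : Set ℝ :=
  {r | ∃ φ ψ : C(X, ℝ), (∀ x y z, h (x, y, z) ≤ φ x + ψ z) ∧
    r = ∫ x, φ x ∂μ + ∫ z, ψ z ∂ν}

theorem dualVals_nonempty [CompactSpace X] (μ ν : Measure X) (h : C(X × X × X, ℝ)) : (dualVals μ ν h).Nonempty :=
  ⟨_, ContinuousMap.const X ‖h‖, 0, fun x y z => by
    simpa using (abs_le.1 (h.norm_coe_le_norm (x, y, z))).2, rfl⟩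

open scoped Pointwise in
theorem sInf_dualVals_smul (μ ν : Measure X) {c : ℝ} (hc : 0 < c) (h : C(X × X × X, ℝ)) :
    sInf (dualVals μ ν (c • h)) = c * sInf (dualVals μ ν h) := by
  have : dualVals μ ν (c • h) = c • dualVals μ ν h := by
    ext r
    rw [Set.mem_smul_set]
    constructor
    · rintro ⟨φ, ψ, H, rfl⟩
      refine ⟨_, ⟨c⁻¹ • φ, c⁻¹ • ψ, fun x y z => ?_, rfl⟩, ?_⟩
      · have := H x y z
        simp only [ContinuousMap.smul_apply, smul_eq_mul] at this ⊢
        rw [← mul_add, inv_mul_eq_div, le_div_iff₀ hc]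
        linarith
      · simp only [ContinuousMap.smul_apply, smul_eq_mul, integral_const_mul]
        field_simp
    · rintro ⟨_, ⟨φ, ψ, H, rfl⟩, rfl⟩
      refine ⟨c • φ, c • ψ, fun x y z => ?_, ?_⟩
      · simp only [ContinuousMap.smul_apply, smul_eq_mul]
        rw [← mul_add]
        exact mul_le_mul_of_nonneg_left (H x y z) hc.le
      · simp only [ContinuousMap.smul_apply, smul_eq_mul, integral_const_mul]
        ring
  rw [this, Real.sInf_smul_of_nonneg hc.le, smul_eq_mul]

variable [CompactSpace X] [BorelSpace X] (μ ν : Measure X) [IsProbabilityMeasure μ] [IsProbabilityMeasure ν]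

theorem dualVals_lower {h : C(X × X × X, ℝ)} {m : ℝ} (hm : ∀ p, m ≤ h p) {r : ℝ}
    (hr : r ∈ dualVals μ ν h) : m ≤ r := by
  obtain ⟨φ, ψ, hφ, rfl⟩ := hr
  have h1 : ∀ z, m - ∫ x, φ x ∂μ ≤ ψ z := fun z => by
    have h2 : ∫ _x, (m - ψ z) ∂μ ≤ ∫ x, φ x ∂μ :=
      integral_mono (integrable_const _) (integrable_contMap μ φ) fun x => by
        have := hφ x x z
        have := hm (x, x, z)
        simp only
        linarith
    simp at h2
    linarith
  have h3 : ∫ _z, (m - ∫ x, φ x ∂μ) ∂ν ≤ ∫ z, ψ z ∂ν :=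
    integral_mono (integrable_const _) (integrable_contMap ν ψ) h1
  simp at h3
  linarith

theorem dualVals_bddBelow (h : C(X × X × X, ℝ)) : BddBelow (dualVals μ ν h) :=
  ⟨-‖h‖, fun _ hr => dualVals_lower μ ν (fun p => (abs_le.1 (h.norm_coe_le_norm p)).1) hr⟩

theorem sInf_dualVals_add (h k : C(X × X × X, ℝ)) :
    sInf (dualVals μ ν (h + k)) ≤ sInf (dualVals μ ν h) + sInf (dualVals μ ν k) := by
  rw [← csInf_add (dualVals_nonempty μ ν h) (dualVals_bddBelow μ ν h)
    (dualVals_nonempty μ ν k) (dualVals_bddBelow μ ν k)]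
  refine le_csInf ((dualVals_nonempty μ ν h).add (dualVals_nonempty μ ν k)) ?_
  rintro _ ⟨_, ⟨φ, ψ, H, rfl⟩, _, ⟨φ', ψ', H', rfl⟩, rfl⟩
  refine csInf_le (dualVals_bddBelow μ ν _) ⟨φ + φ', ψ + ψ', fun x y z => ?_, ?_⟩
  · have := H x y z
    have := H' x y z
    simp only [ContinuousMap.add_apply]
    linarith
  · simp only [ContinuousMap.add_apply]
    rw [integral_add (integrable_contMap μ φ) (integrable_contMap μ φ'),
      integral_add (integrable_contMap ν ψ) (integrable_contMap ν ψ')]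
    ring

/-- Kantorovich duality with a free intermediate variable: there is a plan `γ` on triples
`(x,y,z)` with first marginal `μ` and last marginal `ν` whose cost is the dual supremum. -/
theorem exists_plan_dual (c : C(X × X × X, ℝ)) :
    ∃ γ : Measure (X × X × X), IsProbabilityMeasure γ ∧ γ.map Prod.fst = μ ∧
      γ.map (fun p => p.2.2) = ν ∧
      ∀ ε > 0, ∃ φ ψ : C(X, ℝ), (∀ x y z, φ x + ψ z ≤ c (x, y, z)) ∧
        ∫ p, c p ∂γ - ε ≤ ∫ x, φ x ∂μ + ∫ z, ψ z ∂ν := by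
  set P : C(X × X × X, ℝ) → ℝ := fun h => sInf (dualVals μ ν h) with hP
  have hP0 : P 0 = 0 := by
    have := sInf_dualVals_smul μ ν (c := 2) two_pos 0
    simp only [smul_zero] at this
    simp only [hP]; linarith
  let f : C(X × X × X, ℝ) →ₗ.[ℝ] ℝ := LinearPMap.mkSpanSingleton' (-c) (P (-c)) (by
    intro t ht
    rcases smul_eq_zero.1 ht with h | h
    · simp [h]
    · rw [h, hP0]; simp)
  obtain ⟨L, hLf, hLP⟩ := exists_extension_of_le_sublinear f P
    (fun t ht h => sInf_dualVals_smul μ ν ht h) (sInf_dualVals_add μ ν) (by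
      rintro ⟨w, hw⟩
      obtain ⟨t, rfl⟩ := Submodule.mem_span_singleton.1 hw
      have : f ⟨t • -c, hw⟩ = t * P (-c) := LinearPMap.mkSpanSingleton'_apply _ _ _ _ _
      rw [this]
      change t * P (-c) ≤ P (t • -c)
      rcases lt_trichotomy t 0 with ht | rfl | ht
      · have h1 := sInf_dualVals_smul μ ν (neg_pos.2 ht) (-c)
        have h2 := sInf_dualVals_add μ ν (t • -c) ((-t) • -c)
        rw [← add_smul, add_neg_cancel, zero_smul] at h2
        change P 0 ≤ P _ + P _ at h2
        change P _ = _ * P _ at h1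
        rw [h1, hP0] at h2
        linarith
      · simp [hP0]
      · exact (sInf_dualVals_smul μ ν ht (-c)).ge)
  have hLc : L (-c) = P (-c) := by
    have hm : -c ∈ f.domain := Submodule.mem_span_singleton_self _
    rw [← LinearPMap.mkSpanSingleton'_apply_self (-c) (P (-c)) _ hm]
    exact hLf ⟨-c, hm⟩
  -- Domination by `P` forces `L` to be positive and to have the marginals `μ` and `ν`.
  have hLle : ∀ (h : C(X × X × X, ℝ)) (φ ψ : C(X, ℝ)), (∀ x y z, h (x, y, z) ≤ φ x + ψ z) →
      L h ≤ ∫ x, φ x ∂μ + ∫ z, ψ z ∂ν := fun h φ ψ H =>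
    (hLP h).trans (csInf_le (dualVals_bddBelow μ ν h) ⟨φ, ψ, H, rfl⟩)
  obtain ⟨γ, hγfin, hγ⟩ := exists_measure_of_positive L (fun h hh => by
    have := hLle (-h) 0 0 (fun x y z => by simpa using hh (x, y, z))
    simpa using this)
  have hfst : ∀ φ : C(X, ℝ), ∫ p : X × X × X, φ p.1 ∂γ = ∫ x, φ x ∂μ := by
    have key : ∀ φ : C(X, ℝ), ∫ p : X × X × X, φ p.1 ∂γ ≤ ∫ x, φ x ∂μ := fun φ => by
      have := hLle (φ.comp ⟨Prod.fst, continuous_fst⟩) φ 0 (fun x y z => by simp)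
      rw [← hγ] at this
      simpa using this
    intro φ
    refine le_antisymm (key φ) ?_
    have := key (-φ)
    simp only [ContinuousMap.neg_apply, integral_neg] at this
    linarith
  have hsnd : ∀ φ : C(X, ℝ), ∫ p : X × X × X, φ p.2.2 ∂γ = ∫ x, φ x ∂ν := by
    have key : ∀ φ : C(X, ℝ), ∫ p : X × X × X, φ p.2.2 ∂γ ≤ ∫ x, φ x ∂ν := fun φ => by
      have := hLle (φ.comp ⟨fun p => p.2.2, continuous_snd.comp continuous_snd⟩) 0 φ
        (fun x y z => by simp)
      rw [← hγ] at this
      simpa using this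
    intro φ
    refine le_antisymm (key φ) ?_
    have := key (-φ)
    simp only [ContinuousMap.neg_apply, integral_neg] at this
    linarith
  have hm1 : γ.map Prod.fst = μ := by
    refine ext_of_forall_integral_eq_of_IsFiniteMeasure fun φ => ?_
    rw [integral_map measurable_fst.aemeasurable φ.continuous.aestronglyMeasurable]
    exact hfst φ.toContinuousMap
  have hm2 : γ.map (fun p => p.2.2) = ν := by
    refine ext_of_forall_integral_eq_of_IsFiniteMeasure fun φ => ?_
    rw [integral_map measurable_snd.snd.aemeasurable
      φ.continuous.aestronglyMeasurable]
    exact hsnd φ.toContinuousMap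
  refine ⟨γ, ⟨?_⟩, hm1, hm2, fun ε hε => ?_⟩
  · have : (γ.map Prod.fst) Set.univ = 1 := by rw [hm1]; exact measure_univ
    rwa [Measure.map_apply measurable_fst MeasurableSet.univ, Set.preimage_univ] at this
  · obtain ⟨_, ⟨φ, ψ, H, rfl⟩, hlt⟩ := exists_lt_of_csInf_lt (dualVals_nonempty μ ν (-c))
      (show sInf (dualVals μ ν (-c)) < P (-c) + ε by simp only [hP]; linarith)
    refine ⟨-φ, -ψ, fun x y z => ?_, ?_⟩
    · have := H x y z
      simp only [ContinuousMap.neg_apply] at this ⊢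
      linarith
    · rw [hγ c]
      rw [← hLc, map_neg] at hlt
      simp only [ContinuousMap.neg_apply, integral_neg]
      linarith


/-- The transform `ψ^a(x) = inf_y a(x,y) - ψ(y)` is continuous in `(ψ, x)` jointly because the
infimum runs over a compact space. -/
theorem continuous_transform {Y : Type*} [MetricSpace Y] [CompactSpace Y] (a : C(Y × Y, ℝ)) :
    Continuous fun q : C(Y, ℝ) × Y => ⨅ y, (a (q.2, y) - q.1 y) := by
  have h := IsCompact.continuous_sInf (K := (Set.univ : Set Y)) isCompact_univ
    (f := fun (q : C(Y, ℝ) × Y) y => a (q.2, y) - q.1 y) (by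
      change Continuous fun r : (C(Y, ℝ) × Y) × Y => a (r.1.2, r.2) - r.1.1 r.2
      fun_prop)
  simpa [Set.image_univ, sInf_range] using h

/-- Normalized `K`-Lipschitz functions form a compact set of continuous functions. -/
theorem isCompact_lipschitz {Y : Type*} [MetricSpace Y] [CompactSpace Y] (K : NNReal) (y₀ : Y) :
    IsCompact {ψ : C(Y, ℝ) | LipschitzWith K ψ ∧ ψ y₀ = 0} := by
  let e : BoundedContinuousFunction Y ℝ ≃ᵢ C(Y, ℝ) :=
    (ContinuousMap.isometryEquivBoundedOfCompact Y ℝ).symm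
  have hcl : ∀ s : Set (BoundedContinuousFunction Y ℝ), IsCompact s → IsCompact (e '' s) :=
    fun s hs => hs.image e.continuous
  have : {ψ : C(Y, ℝ) | LipschitzWith K ψ ∧ ψ y₀ = 0} =
      e '' {ψ : BoundedContinuousFunction Y ℝ | LipschitzWith K ψ ∧ ψ y₀ = 0} := by
    ext ψ
    constructor
    · intro h
      exact ⟨e.symm ψ, h, e.apply_symm_apply ψ⟩
    · rintro ⟨φ, h, rfl⟩
      exact h
  rw [this]
  refine hcl _ (BoundedContinuousFunction.arzela_ascoli₂
    (Metric.closedBall 0 (K * Metric.diam (Set.univ : Set Y))) (isCompact_closedBall _ _) _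
    ?_ ?_ ?_)
  · refine IsClosed.inter ?_ ?_
    · have heq : {ψ : BoundedContinuousFunction Y ℝ | LipschitzWith K ψ} =
          ⋂ x, ⋂ y, {ψ | dist (ψ x) (ψ y) ≤ K * dist x y} := by
        ext ψ
        simp [lipschitzWith_iff_dist_le_mul]
      change IsClosed {ψ : BoundedContinuousFunction Y ℝ | LipschitzWith K ψ}
      rw [heq]
      refine isClosed_iInter fun x => isClosed_iInter fun y => ?_
      exact isClosed_le (by fun_prop) continuous_const
    · exact isClosed_eq (by fun_prop) continuous_const
  · rintro ψ x ⟨hψ, h0⟩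
    have := hψ.dist_le_mul x y₀
    rw [h0] at this
    rw [Metric.mem_closedBall]
    refine this.trans (mul_le_mul_of_nonneg_left ?_ K.coe_nonneg)
    exact Metric.dist_le_diam_of_mem isCompact_univ.isBounded trivial trivial
  · refine LipschitzWith.uniformEquicontinuous _ K (fun f => f.2.1) |>.equicontinuous

theorem ciInf_lipschitz {Y ι : Type*} [MetricSpace Y] [Nonempty ι] (K : NNReal)
    (F : ι → Y → ℝ) (hF : ∀ i, LipschitzWith K (F i))
    (hb : ∀ y, BddBelow (Set.range fun i => F i y)) :
    LipschitzWith K fun y => ⨅ i, F i y := by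
  refine LipschitzWith.of_le_add_mul K fun x y => ?_
  rw [← sub_le_iff_le_add]
  refine le_ciInf fun i => ?_
  have h1 := ciInf_le (hb x) i
  have h2 := (abs_le.1 ((hF i).dist_le_mul x y)).2
  linarith

/-- Attainment in the dual problem for the cost `a(x,y) + K dist(y,z)`: the potential `ψ` in the
last variable may be taken `K`-Lipschitz and the one in `x` its transform, and Arzelà–Ascoli then
yields a maximizer. -/
theorem exists_plan_potential [Nonempty X] (a : C(X × X, ℝ)) (K : NNReal) :
    ∃ γ : Measure (X × X × X), IsProbabilityMeasure γ ∧ γ.map Prod.fst = μ ∧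
      γ.map (fun p => p.2.2) = ν ∧
      ∃ ψ : C(X, ℝ), LipschitzWith K ψ ∧
        ∫ p, (a (p.1, p.2.1) + K * dist p.2.1 p.2.2) ∂γ
          ≤ ∫ x, (⨅ y, (a (x, y) - ψ y)) ∂μ + ∫ z, ψ z ∂ν := by
  let c : C(X × X × X, ℝ) := ⟨fun p => a (p.1, p.2.1) + K * dist p.2.1 p.2.2, by fun_prop⟩
  obtain ⟨γ, hγ, hγ1, hγ2, hdual⟩ := exists_plan_dual μ ν c
  refine ⟨γ, hγ, hγ1, hγ2, ?_⟩
  obtain ⟨y₀⟩ := ‹Nonempty X›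
  have : Nonempty X := ⟨y₀⟩
  let T : C(C(X, ℝ), C(X, ℝ)) := ContinuousMap.curry ⟨_, continuous_transform a⟩
  have hint : ∀ (ρ : Measure X) [IsProbabilityMeasure ρ],
      Continuous fun f : C(X, ℝ) => ∫ x, f x ∂ρ := fun ρ _ => by
    refine LipschitzWith.continuous (K := 1) (LipschitzWith.of_dist_le_mul fun f g => ?_)
    rw [dist_eq_norm, ← integral_sub (integrable_contMap ρ f) (integrable_contMap ρ g)]
    refine (norm_integral_le_of_norm_le_const (C := dist f g) (ae_of_all _ fun x => ?_)).trans ?_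
    · rw [← dist_eq_norm]; exact ContinuousMap.dist_apply_le_dist x
    · simp
  let J : C(X, ℝ) → ℝ := fun ψ => ∫ x, T ψ x ∂μ + ∫ z, ψ z ∂ν
  have hJ : Continuous J := ((hint μ).comp T.continuous).add (hint ν)
  obtain ⟨ψ, hψ, hmax⟩ := (isCompact_lipschitz K y₀).exists_isMaxOn
    ⟨0, LipschitzWith.of_dist_le_mul fun x y => by simp; positivity, rfl⟩ hJ.continuousOn
  refine ⟨ψ, hψ.1, le_of_forall_pos_sub_le fun ε hε => ?_⟩
  obtain ⟨φ, ψ₁, H, hε⟩ := hdual ε hε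
  refine hε.trans ?_
  -- Replacing `ψ₁` by the infimum of the `F p` raises it to a `K`-Lipschitz function, since each
  -- `F p` is `K`-Lipschitz; subtracting its value at `y₀` is compensated in the other potential.
  let F : X × X → X → ℝ := fun p z => a p + K * dist p.2 z - φ p.1
  have hb : ∀ z, BddBelow (Set.range fun p => F p z) := fun z =>
    (isCompact_range (show Continuous fun p => F p z by simp only [F]; fun_prop)).bddBelow
  have hψ' : LipschitzWith K fun z => ⨅ p, F p z := by
    refine ciInf_lipschitz K F (fun p => LipschitzWith.of_le_add_mul K fun x y => ?_) hb
    simp only [F]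
    have := mul_le_mul_of_nonneg_left (dist_triangle p.2 y x) K.coe_nonneg
    rw [dist_comm y x] at this
    linarith
  let t : ℝ := ⨅ p, F p y₀
  let ψ₂ : C(X, ℝ) := ⟨fun z => (⨅ p, F p z) - t, hψ'.continuous.sub continuous_const⟩
  have hψ₂ : ψ₂ ∈ {ψ : C(X, ℝ) | LipschitzWith K ψ ∧ ψ y₀ = 0} := by
    refine ⟨LipschitzWith.of_dist_le_mul fun x y => ?_, sub_self _⟩
    simpa [ψ₂] using hψ'.dist_le_mul x y
  refine le_trans ?_ (hmax hψ₂)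
  have h1 : ∫ x, (φ x + t) ∂μ ≤ ∫ x, T ψ₂ x ∂μ := by
    refine integral_mono ((integrable_contMap μ φ).add (integrable_const t))
      (integrable_contMap μ _) fun x => ?_
    refine le_ciInf fun y => ?_
    have := ciInf_le (hb y) (x, y)
    simp only [F, dist_self] at this
    simp only [ψ₂, ContinuousMap.coe_mk, F]
    linarith
  have h2 : ∫ z, (ψ₁ z - t) ∂ν ≤ ∫ z, ψ₂ z ∂ν := by
    refine integral_mono ((integrable_contMap ν ψ₁).sub (integrable_const t))
      (integrable_contMap ν _) fun z => ?_
    have : ψ₁ z ≤ ⨅ p, F p z := le_ciInf fun p => by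
      have := H p.1 p.2 z
      simp only [c, ContinuousMap.coe_mk] at this
      simp only [F]
      linarith
    simp only [ψ₂, ContinuousMap.coe_mk]
    linarith
  rw [integral_add (integrable_contMap μ φ) (integrable_const t)] at h1
  rw [integral_sub (integrable_contMap ν ψ₁) (integrable_const t)] at h2
  simp only [integral_const, probReal_univ, one_smul] at h1 h2
  simp only [J]
  linarith

end Duality

/-! ### Transport costs between measures on `Ω` -/

section Transport

variable {Ω : Set (Ed d)} {α β : Measure (Ed d)}

theorem IsCoupling.swap {γ : Measure (Ed d × Ed d)} (h : IsCoupling α β γ) :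
    IsCoupling β α (γ.map Prod.swap) := by
  constructor
  · rw [Measure.map_map measurable_fst measurable_swap]; exact h.2
  · rw [Measure.map_map measurable_snd measurable_swap]; exact h.1

theorem W1_comm (α β : Measure (Ed d)) : W1 α β = W1 β α := by
  have key : ∀ α β : Measure (Ed d),
      {r | ∃ γ : Measure (Ed d × Ed d), IsCoupling α β γ ∧ r = ∫ p, ‖p.1 - p.2‖ ∂γ} ⊆
      {r | ∃ γ : Measure (Ed d × Ed d), IsCoupling β α γ ∧ r = ∫ p, ‖p.1 - p.2‖ ∂γ} := by
    rintro α β _ ⟨γ, hγ, rfl⟩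
    refine ⟨_, hγ.swap, ?_⟩
    rw [integral_map measurable_swap.aemeasurable
      (by exact Continuous.aestronglyMeasurable (by fun_prop))]
    simp only [Prod.fst_swap, Prod.snd_swap, norm_sub_rev]
  exact congrArg sInf (Set.Subset.antisymm (key α β) (key β α))

theorem tCost_le {c : Ed d → Ed d → ℝ} (hc : ∀ x y, 0 ≤ c x y) {γ : Measure (Ed d × Ed d)}
    (h : IsCoupling α β γ) : tCost c α β ≤ ∫ p, c p.1 p.2 ∂γ :=
  csInf_le ⟨0, by rintro _ ⟨γ, -, rfl⟩; exact integral_nonneg fun p => hc _ _⟩ ⟨γ, h, rfl⟩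

theorem tCost_nonneg {c : Ed d → Ed d → ℝ} (hc : ∀ x y, 0 ≤ c x y) : 0 ≤ tCost c α β :=
  Real.sInf_nonneg (by rintro _ ⟨γ, -, rfl⟩; exact integral_nonneg fun p => hc _ _)

theorem ProbOn.ae_mem (h : ProbOn Ω α) : ∀ᵐ x ∂α, x ∈ Ω := h.2

theorem ProbOn.restrict_eq (h : ProbOn Ω α) : α.restrict Ω = α :=
  Measure.restrict_eq_self_of_ae_mem h.ae_mem

theorem ProbOn.integrable (hΩ : IsCompact Ω) (h : ProbOn Ω α) {f : Ed d → ℝ}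
    (hf : ContinuousOn f Ω) : Integrable f α := by
  have := h.1
  rw [← h.restrict_eq]
  exact hf.integrableOn_compact hΩ

theorem exists_coupling (hα : ProbOn Ω α) (hβ : ProbOn Ω β) :
    ∃ γ : Measure (Ed d × Ed d), IsCoupling α β γ := by
  have := hα.1
  have := hβ.1
  exact ⟨α.prod β, Measure.map_fst_prod.trans (by simp), Measure.map_snd_prod.trans (by simp)⟩

theorem IsCoupling.isProbabilityMeasure {γ : Measure (Ed d × Ed d)} (h : IsCoupling α β γ)
    (hα : ProbOn Ω α) : IsProbabilityMeasure γ := by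
  have := hα.1
  refine ⟨?_⟩
  have h1 : (γ.map Prod.fst) Set.univ = 1 := by rw [h.1]; exact measure_univ
  rwa [Measure.map_apply measurable_fst MeasurableSet.univ, Set.preimage_univ] at h1

theorem IsCoupling.ae_mem {γ : Measure (Ed d × Ed d)} (h : IsCoupling α β γ)
    (hα : ProbOn Ω α) (hβ : ProbOn Ω β) : ∀ᵐ p ∂γ, p ∈ Ω ×ˢ Ω := by
  have h1 : ∀ᵐ p ∂γ, p.1 ∈ Ω :=
    ae_of_ae_map measurable_fst.aemeasurable (by rw [h.1]; exact hα.ae_mem)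
  have h2 : ∀ᵐ p ∂γ, p.2 ∈ Ω :=
    ae_of_ae_map measurable_snd.aemeasurable (by rw [h.2]; exact hβ.ae_mem)
  filter_upwards [h1, h2] with p h1 h2 using ⟨h1, h2⟩

theorem IsCoupling.integrable (hΩ : IsCompact Ω) {γ : Measure (Ed d × Ed d)}
    (h : IsCoupling α β γ) (hα : ProbOn Ω α) (hβ : ProbOn Ω β) {f : Ed d × Ed d → ℝ}
    (hf : ContinuousOn f (Ω ×ˢ Ω)) : Integrable f γ := by
  have := h.isProbabilityMeasure hα
  rw [← Measure.restrict_eq_self_of_ae_mem (h.ae_mem hα hβ)]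
  exact hf.integrableOn_compact (hΩ.prod hΩ)

/-- Weak Kantorovich duality for the cost `k c`. -/
theorem weak_duality (hΩ : IsCompact Ω) (hα : ProbOn Ω α) (hβ : ProbOn Ω β)
    {c : Ed d → Ed d → ℝ} (hc : Continuous fun p : Ed d × Ed d => c p.1 p.2) {k : ℝ} (hk : 0 < k)
    {f g : Ed d → ℝ} (hf : ContinuousOn f Ω) (hg : ContinuousOn g Ω)
    (hfg : ∀ x ∈ Ω, ∀ y ∈ Ω, f x + g y ≤ k * c x y) :
    ∫ x, f x ∂α + ∫ y, g y ∂β ≤ k * tCost c α β := by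
  rw [← div_le_iff₀' hk]
  refine le_csInf ?_ ?_
  · obtain ⟨γ, hγ⟩ := exists_coupling hα hβ
    exact ⟨_, γ, hγ, rfl⟩
  rintro _ ⟨γ, hγ, rfl⟩
  rw [div_le_iff₀' hk, ← integral_const_mul]
  have hf1 : ∫ x, f x ∂α = ∫ p, f p.1 ∂γ := by
    rw [← hγ.1, integral_map measurable_fst.aemeasurable]
    rw [hγ.1]; exact (hα.integrable hΩ hf).aestronglyMeasurable
  have hg1 : ∫ x, g x ∂β = ∫ p, g p.2 ∂γ := by
    rw [← hγ.2, integral_map measurable_snd.aemeasurable]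
    rw [hγ.2]; exact (hβ.integrable hΩ hg).aestronglyMeasurable
  have if1 : Integrable (fun p : Ed d × Ed d => f p.1) γ :=
    hγ.integrable hΩ hα hβ (hf.comp continuousOn_fst fun p hp => hp.1)
  have ig1 : Integrable (fun p : Ed d × Ed d => g p.2) γ :=
    hγ.integrable hΩ hα hβ (hg.comp continuousOn_snd fun p hp => hp.2)
  rw [hf1, hg1, ← integral_add if1 ig1]
  refine integral_mono_ae (if1.add ig1)
    (hγ.integrable hΩ hα hβ (continuous_const.mul hc).continuousOn) ?_
  filter_upwards [hγ.ae_mem hα hβ] with p hp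
  exact hfg _ hp.1 _ hp.2

/-- A `λ`-Lipschitz potential satisfies `∫ φ d(α - β) ≤ λ W₁(α, β)`. -/
theorem lipschitz_le_W1 (hΩ : IsCompact Ω) (hα : ProbOn Ω α) (hβ : ProbOn Ω β) {lam : ℝ}
    (hlam : 0 < lam) {φ : Ed d → ℝ} (hφ : LipschitzOnWith (Real.toNNReal lam) φ Ω) :
    ∫ x, φ x ∂α - ∫ x, φ x ∂β ≤ lam * W1 α β := by
  have := weak_duality hΩ hα hβ (c := fun x y => ‖x - y‖) (by fun_prop) hlam
    hφ.continuousOn hφ.continuousOn.neg (fun x hx y hy => by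
      have h := hφ.dist_le_mul x hx y hy
      rw [Real.coe_toNNReal _ hlam.le, dist_eq_norm, dist_eq_norm] at h
      have h2 := (abs_le.1 h).2
      simp only [Pi.neg_apply]
      linarith)
  simp only [Pi.neg_apply, integral_neg] at this
  exact (sub_eq_add_neg _ _).trans_le this

theorem continuousOn_ctrans (hΩ : IsCompact Ω) {φ : Ed d → ℝ} (hφ : ContinuousOn φ Ω) :
    ContinuousOn (ctrans c2 Ω φ) Ω := by
  have : CompactSpace Ω := isCompact_iff_compactSpace.1 hΩ
  let a : C(Ω × Ω, ℝ) := ⟨fun p => c2 p.1.1 p.2.1, by unfold c2; fun_prop⟩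
  have h := (continuous_transform a).comp
    (Continuous.prodMk_right (⟨Ω.domRestrict φ, hφ.domRestrict⟩ : C(Ω, ℝ)))
  rw [continuousOn_iff_continuous_domRestrict]
  refine h.congr fun x => ?_
  simp only [Set.domRestrict_apply, ctrans, sInf_image']
  rfl

/-- Weak duality for `½ W₂²`, in terms of the `c₂`-transform. -/
theorem subdiff_le (hΩ : IsCompact Ω) {μ ρ : Measure (Ed d)} (hμ : ProbOn Ω μ) (hρ : ProbOn Ω ρ)
    {φ : Ed d → ℝ} (hφ : ContinuousOn φ Ω) :
    (∫ x, ctrans c2 Ω φ x ∂μ) + ∫ x, φ x ∂ρ ≤ W2sq ρ μ / 2 := by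
  have := weak_duality hΩ hρ hμ (c := fun x y => ‖x - y‖ ^ 2) (by fun_prop)
    (k := 1 / 2) (by norm_num) hφ (continuousOn_ctrans hΩ hφ) (fun y hy x hx => by
      have hb : BddBelow ((fun y => c2 x y - φ y) '' Ω) :=
        hΩ.bddBelow_image (ContinuousOn.sub (by unfold c2; fun_prop) hφ)
      have h1 : ctrans c2 Ω φ x ≤ c2 x y - φ y := csInf_le hb ⟨y, hy, rfl⟩
      simp only [c2, norm_sub_rev x y] at h1
      linarith)
  rw [add_comm]
  refine this.trans (le_of_eq ?_)
  rw [W2sq]; ring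

/-- At a minimizer `ρ` of `½W₂²(·,μ) + λ W₁(·,ν)` there is a `λ`-Lipschitz subgradient of
`½W₂²(·,μ)` which is also a Kantorovich potential for `λ W₁(ν,ρ)`. -/
theorem exists_potential (hΩ : IsCompact Ω) {μ ν ρ : Measure (Ed d)} (hμ : ProbOn Ω μ)
    (hν : ProbOn Ω ν) (hρ : ProbOn Ω ρ) {lam : ℝ} (hlam : 0 < lam)
    (hmin : ∀ σ, ProbOn Ω σ →
      W2sq ρ μ / 2 + lam * W1 ρ ν ≤ W2sq σ μ / 2 + lam * W1 σ ν) :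
    ∃ φ : Ed d → ℝ, InSubdiffW2 Ω μ ρ φ ∧ LipschitzOnWith (Real.toNNReal lam) φ Ω ∧
      ∫ x, φ x ∂ν - ∫ x, φ x ∂ρ = lam * W1 ν ρ := by
  have hΩm : MeasurableSet Ω := hΩ.measurableSet
  have : CompactSpace Ω := isCompact_iff_compactSpace.1 hΩ
  have hemb := MeasurableEmbedding.subtype_coe hΩm
  -- Measures on `Ω` as measures on the compact space `↥Ω`.
  have hmap : ∀ {α : Measure (Ed d)}, ProbOn Ω α →
      (α.comap ((↑) : Ω → Ed d)).map ((↑) : Ω → Ed d) = α := fun h => by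
    rw [map_comap_subtype_coe hΩm, h.restrict_eq]
  have hprob : ∀ {α : Measure (Ed d)}, ProbOn Ω α →
      IsProbabilityMeasure (α.comap ((↑) : Ω → Ed d)) := fun {α} h => by
    have := h.1
    refine ⟨?_⟩
    have h1 : ((α.comap ((↑) : Ω → Ed d)).map ((↑) : Ω → Ed d)) Set.univ = 1 := by
      rw [hmap h]; exact measure_univ
    rwa [hemb.map_apply, Set.preimage_univ] at h1
  have hint : ∀ {α : Measure (Ed d)}, ProbOn Ω α → ∀ f : Ed d → ℝ,
      ∫ x, f x ∂α = ∫ x : Ω, f x ∂(α.comap ((↑) : Ω → Ed d)) := fun {α} h f => by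
    conv_lhs => rw [← hmap h]
    exact hemb.integral_map f
  have := hprob hμ
  have := hprob hν
  have hne : Nonempty Ω := nonempty_of_isProbabilityMeasure (μ.comap ((↑) : Ω → Ed d))
  let a : C(Ω × Ω, ℝ) := ⟨fun p => c2 p.1.1 p.2.1, by unfold c2; fun_prop⟩
  obtain ⟨γ, hγ, hγ1, hγ2, ψ, hψ, hval⟩ := exists_plan_potential
    (μ.comap ((↑) : Ω → Ed d)) (ν.comap ((↑) : Ω → Ed d)) a (Real.toNNReal lam)
  classical
  let φ : Ed d → ℝ := fun x => if h : x ∈ Ω then ψ ⟨x, h⟩ else 0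
  have hφψ : ∀ x : Ω, φ x = ψ x := fun x => by simp [φ]
  have hφlip : LipschitzOnWith (Real.toNNReal lam) φ Ω :=
    LipschitzOnWith.of_dist_le_mul fun x hx y hy => by
      rw [hφψ ⟨x, hx⟩, hφψ ⟨y, hy⟩]
      exact hψ.dist_le_mul ⟨x, hx⟩ ⟨y, hy⟩
  -- The middle marginal of the plan is a competitor in the minimization.
  let σ : Measure (Ed d) := γ.map fun p => (p.2.1 : Ed d)
  have hm1 : Measurable fun p : Ω × Ω × Ω => (p.1 : Ed d) := by fun_prop
  have hm2 : Measurable fun p : Ω × Ω × Ω => (p.2.1 : Ed d) := by fun_prop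
  have hm3 : Measurable fun p : Ω × Ω × Ω => (p.2.2 : Ed d) := by fun_prop
  have hσ : ProbOn Ω σ := by
    refine ⟨Measure.isProbabilityMeasure_map hm2.aemeasurable, ?_⟩
    rw [Measure.map_apply hm2 hΩm.compl]
    convert measure_empty (μ := γ)
    ext p
    simp
  have hγμ : γ.map (fun p => (p.1 : Ed d)) = μ := by
    rw [← hmap hμ, ← hγ1, Measure.map_map hemb.measurable measurable_fst]
    rfl
  have hγν : γ.map (fun p => (p.2.2 : Ed d)) = ν := by
    rw [← hmap hν, ← hγ2, Measure.map_map hemb.measurable measurable_snd.snd]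
    rfl
  have hW2 : W2sq σ μ ≤ ∫ p, ‖(p.2.1 : Ed d) - p.1‖ ^ 2 ∂γ := by
    refine (tCost_le (γ := γ.map fun p => ((p.2.1 : Ed d), (p.1 : Ed d)))
      (fun x y => by positivity) ⟨?_, ?_⟩).trans (le_of_eq ?_)
    · rw [Measure.map_map measurable_fst (hm2.prodMk hm1)]; rfl
    · rw [Measure.map_map measurable_snd (hm2.prodMk hm1)]; exact hγμ
    · rw [integral_map (hm2.prodMk hm1).aemeasurable
        (by exact Continuous.aestronglyMeasurable (by fun_prop))]
  have hW1 : W1 σ ν ≤ ∫ p, ‖(p.2.1 : Ed d) - p.2.2‖ ∂γ := by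
    refine (tCost_le (γ := γ.map fun p => ((p.2.1 : Ed d), (p.2.2 : Ed d)))
      (fun x y => by positivity) ⟨?_, ?_⟩).trans (le_of_eq ?_)
    · rw [Measure.map_map measurable_fst (hm2.prodMk hm3)]; rfl
    · rw [Measure.map_map measurable_snd (hm2.prodMk hm3)]; exact hγν
    · rw [integral_map (hm2.prodMk hm3).aemeasurable
        (by exact Continuous.aestronglyMeasurable (by fun_prop))]
  have hcost : ∫ p : Ω × Ω × Ω, (a (p.1, p.2.1) + (Real.toNNReal lam) * dist p.2.1 p.2.2) ∂γ
      = (∫ p, ‖(p.2.1 : Ed d) - p.1‖ ^ 2 ∂γ) / 2 +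
        lam * ∫ p, ‖(p.2.1 : Ed d) - p.2.2‖ ∂γ := by
    rw [← integral_const_mul, ← integral_div, ← integral_add]
    · refine integral_congr_ae (ae_of_all _ fun p => ?_)
      simp only [a, ContinuousMap.coe_mk, c2, Real.coe_toNNReal _ hlam.le, Subtype.dist_eq,
        dist_eq_norm, norm_sub_rev (p.1 : Ed d)]
    · exact integrable_contMap γ ⟨fun p => ‖(p.2.1 : Ed d) - p.1‖ ^ 2 / 2, by fun_prop⟩
    · exact integrable_contMap γ ⟨fun p => lam * ‖(p.2.1 : Ed d) - p.2.2‖, by fun_prop⟩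
  have hdual : ∫ x : Ω, (⨅ y, (a (x, y) - ψ y)) ∂(μ.comap ((↑) : Ω → Ed d)) +
      ∫ z, ψ z ∂(ν.comap ((↑) : Ω → Ed d)) = ∫ x, ctrans c2 Ω φ x ∂μ + ∫ x, φ x ∂ν := by
    rw [hint hμ, hint hν]
    simp only [ctrans, sInf_image', hφψ]
    rfl
  rw [hcost, hdual] at hval
  have h1 := hmin σ hσ
  have h2 := subdiff_le hΩ hμ hρ hφlip.continuousOn
  have h3 := lipschitz_le_W1 hΩ hν hρ hlam hφlip
  have h4 := mul_le_mul_of_nonneg_left hW1 hlam.le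
  rw [W1_comm ν ρ] at h3 ⊢
  exact ⟨φ, ⟨hφlip.continuousOn, by linarith⟩, hφlip, by linarith⟩

/-- The energy identity for a single step. -/
theorem Dlam_add_W1 (hΩ : IsCompact Ω) {μ ν ρ : Measure (Ed d)} (hμ : ProbOn Ω μ)
    (hν : ProbOn Ω ν) (hρ : ProbOn Ω ρ) {lam : ℝ} (hlam : 0 < lam)
    (hmin : ∀ σ, ProbOn Ω σ →
      W2sq ρ μ / 2 + lam * W1 ρ ν ≤ W2sq σ μ / 2 + lam * W1 σ ν) :
    Dlam Ω lam μ ν ρ + ((lam * W1 ν ρ : ℝ) : EReal)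
      = ((W2sq ν μ / 2 - W2sq ρ μ / 2 : ℝ) : EReal) := by
  have hsup : (⨆ φ ∈ {φ : Ed d → ℝ | InSubdiffW2 Ω μ ρ φ ∧
      LipschitzOnWith (Real.toNNReal lam) φ Ω},
      (((∫ x, φ x ∂ν) - ∫ x, φ x ∂ρ : ℝ) : EReal)) = ((lam * W1 ν ρ : ℝ) : EReal) := by
    refine le_antisymm (iSup₂_le fun φ hφ => ?_) ?_
    · exact EReal.coe_le_coe_iff.2 (lipschitz_le_W1 hΩ hν hρ hlam hφ.2)
    · obtain ⟨φ, h1, h2, h3⟩ := exists_potential hΩ hμ hν hρ hlam hmin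
      rw [← h3]
      exact le_iSup₂_of_le φ ⟨h1, h2⟩ le_rfl
  rw [Dlam, hsup, ← EReal.coe_sub, ← EReal.coe_sub, ← EReal.coe_add, sub_add_cancel]

theorem W1_self (α : Measure (Ed d)) : W1 α α = 0 := by
  refine le_antisymm ?_ (tCost_nonneg fun x y => norm_nonneg _)
  have hm : Measurable fun x : Ed d => (x, x) := by fun_prop
  refine (tCost_le (γ := α.map fun x => (x, x)) (fun x y => norm_nonneg _)
    ⟨?_, ?_⟩).trans (le_of_eq ?_)
  · rw [Measure.map_map measurable_fst hm]; exact Measure.map_id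
  · rw [Measure.map_map measurable_snd hm]; exact Measure.map_id
  · rw [integral_map hm.aemeasurable
      (by exact Continuous.aestronglyMeasurable (by fun_prop))]
    simp

theorem W2sq_self (α : Measure (Ed d)) : W2sq α α = 0 := by
  refine le_antisymm ?_ (tCost_nonneg fun x y => by positivity)
  have hm : Measurable fun x : Ed d => (x, x) := by fun_prop
  refine (tCost_le (γ := α.map fun x => (x, x)) (fun x y => by positivity)
    ⟨?_, ?_⟩).trans (le_of_eq ?_)
  · rw [Measure.map_map measurable_fst hm]; exact Measure.map_id
  · rw [Measure.map_map measurable_snd hm]; exact Measure.map_id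
  · rw [integral_map hm.aemeasurable
      (by exact Continuous.aestronglyMeasurable (by fun_prop))]
    simp

theorem W1_le_diam (hΩ : IsCompact Ω) (hα : ProbOn Ω α) (hβ : ProbOn Ω β) :
    W1 α β ≤ Metric.diam Ω := by
  obtain ⟨γ, hγ⟩ := exists_coupling hα hβ
  have := hγ.isProbabilityMeasure hα
  refine (tCost_le (fun x y => norm_nonneg _) hγ).trans ?_
  have h := integral_mono_ae (μ := γ) (f := fun p => ‖p.1 - p.2‖)
    (g := fun _ => Metric.diam Ω) (hγ.integrable hΩ hα hβ (by fun_prop)) (integrable_const _) (by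
      filter_upwards [hγ.ae_mem hα hβ] with p hp
      rw [← dist_eq_norm]
      exact Metric.dist_le_diam_of_mem hΩ.isBounded hp.1 hp.2)
  simpa using h

end Transport

/-- multiscale transport: energy identity. Let `Ω ⊂ ℝ^d` be compact
convex with non-negligible interior, `μ, ν ∈ 𝒫(Ω)` with `μ ≪ Lebesgue`, `λ₀ > 0`,
`λ_n = λ₀/2^n`, `ν₀ = ν`, and `ν_{n+1}` the minimizer over `𝒫(Ω)` of
`ρ ↦ (1/2)W₂²(ρ,μ) + λ_n W₁(ρ,ν_n)`. Then
`(1/2)W₂²(ν,μ) = Σ_{n=0}^∞ [D_{λ_n}(ν_n,ν_{n+1}) + λ_n W₁(ν_n,ν_{n+1})]`,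
where the reference measure in `D_{λ_n}` is `μ`. -/
theorem stmt19 (d : ℕ) (Ω : Set (Ed d)) (hΩc : IsCompact Ω) (hΩconv : Convex ℝ Ω)
    (hΩint : volume (interior Ω) ≠ 0)
    (μ ν : Measure (Ed d)) (hμ : ProbOn Ω μ) (hν : ProbOn Ω ν)
    (hμac : μ ≪ (volume : Measure (Ed d)))
    (lam0 : ℝ) (hlam0 : 0 < lam0)
    (νs : ℕ → Measure (Ed d)) (h0 : νs 0 = ν)
    (hstep : ∀ n : ℕ, ProbOn Ω (νs (n + 1)) ∧
      ∀ ρ, ProbOn Ω ρ →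
        W2sq (νs (n + 1)) μ / 2 + (lam0 / 2 ^ n) * W1 (νs (n + 1)) (νs n)
          ≤ W2sq ρ μ / 2 + (lam0 / 2 ^ n) * W1 ρ (νs n)) :
    ((W2sq ν μ / 2 : ℝ) : EReal)
      = ∑' n : ℕ,
          (Dlam Ω (lam0 / 2 ^ n) μ (νs n) (νs (n + 1))
            + (((lam0 / 2 ^ n) * W1 (νs n) (νs (n + 1)) : ℝ) : EReal)) := by
  have hprob : ∀ n, ProbOn Ω (νs n) := fun n => by
    cases n with
    | zero => rw [h0]; exact hν
    | succ n => exact (hstep n).1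
  have hlam : ∀ n : ℕ, 0 < lam0 / 2 ^ n := fun n => by positivity
  let E : ℕ → ℝ := fun n => W2sq (νs n) μ / 2
  have hE : ∀ n, 0 ≤ E n := fun n =>
    div_nonneg (tCost_nonneg fun x y => by positivity) zero_le_two
  have hterm : ∀ n, Dlam Ω (lam0 / 2 ^ n) μ (νs n) (νs (n + 1))
      + (((lam0 / 2 ^ n) * W1 (νs n) (νs (n + 1)) : ℝ) : EReal)
      = ((E n - E (n + 1) : ℝ) : EReal) := fun n =>
    Dlam_add_W1 hΩc hμ (hprob n) (hprob (n + 1)) (hlam n) (hstep n).2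
  have hW1 : ∀ n, 0 ≤ (lam0 / 2 ^ n) * W1 (νs (n + 1)) (νs n) := fun n =>
    mul_nonneg (hlam n).le (tCost_nonneg fun x y => norm_nonneg _)
  -- Comparison with the competitor `νs n` shows that the energy decreases.
  have hmono : ∀ n, 0 ≤ E n - E (n + 1) := fun n => by
    have h1 := (hstep n).2 (νs n) (hprob n)
    rw [W1_self, mul_zero, add_zero] at h1
    have := hW1 n
    simp only [E]
    linarith
  -- Comparison with the competitor `μ` shows that it tends to zero.
  have hle : ∀ n, E (n + 1) ≤ lam0 / 2 ^ n * Metric.diam Ω := fun n => by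
    have h1 := (hstep n).2 μ hμ
    rw [W2sq_self, zero_div, zero_add] at h1
    have h2 := mul_le_mul_of_nonneg_left (W1_le_diam hΩc hμ (hprob n)) (hlam n).le
    have := hW1 n
    simp only [E]
    linarith
  have hlim : Tendsto E atTop (𝓝 0) := by
    rw [← tendsto_add_atTop_iff_nat 1]
    refine squeeze_zero (fun n => hE (n + 1)) hle ?_
    have h1 : Tendsto (fun n : ℕ => lam0 * (1 / 2 : ℝ) ^ n * Metric.diam Ω) atTop
        (𝓝 (lam0 * 0 * Metric.diam Ω)) :=
      ((tendsto_pow_atTop_nhds_zero_of_lt_one (by norm_num) (by norm_num)).const_mul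
        lam0).mul_const _
    simpa [div_eq_mul_inv] using h1
  have hsum : HasSum (fun n => E n - E (n + 1)) (E 0) := by
    rw [hasSum_iff_tendsto_nat_of_nonneg hmono]
    simp only [Finset.sum_range_sub']
    simpa using hlim.const_sub (E 0)
  let toE : ℝ →+ EReal :=
    { toFun := fun r => (r : EReal), map_zero' := EReal.coe_zero, map_add' := EReal.coe_add }
  have hsumE : HasSum (fun n => ((E n - E (n + 1) : ℝ) : EReal)) ((E 0 : ℝ) : EReal) :=
    hsum.map toE continuous_coe_real_ereal
  rw [tsum_congr hterm, hsumE.tsum_eq]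
  simp only [E, h0]
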